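/- arXiv:1503.04048 — 3 statements merged into one kernel-verified Lean document; each statement's English description precedes it below -/
import Mathlib

section
/- A nontrivial (at least two vertices) simple graph G of order n admits an orientation D such that γ_oso(D) = n if, and only if, G is bipartite. -/
/-!
If a digraph contains consecutive arcs `u → v → w`, then `V ∖ {w}` is an OSODS: `v` defends `w`,
and once it has moved there, `u` dominates the vacated `v`. If instead every vertex is a source or
a sink, a vertex that defends another one has no in-neighbor, so it is left undominated by its
move, and `V` is the only OSODS. Thus `γ_oso = n` characterizes the orientations in which every
vertex is a source or a sink, and a graph has such an orientation exactly when it is bipartite,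
the sources forming one side and the sinks the other.
-/

open Finset

variable {V : Type*}

/-- `S` is an out-dominating set of the digraph with arc relation `A`. -/
def OutDom (A : V → V → Prop) (S : Finset V) : Prop :=
  ∀ v : V, v ∉ S → ∃ u ∈ S, A u v

/-- `S` is an in-dominating set. -/
def InDom (A : V → V → Prop) (S : Finset V) : Prop :=
  ∀ v : V, v ∉ S → ∃ u ∈ S, A v u

/-- `S` is a dominating set of the underlying undirected graph of the digraph `A`. -/
def DomG (A : V → V → Prop) (S : Finset V) : Prop :=
  ∀ v : V, v ∉ S → ∃ u ∈ S, A u v ∨ A v u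

/-- Secure dominating set of the underlying undirected graph. -/
def SDS [DecidableEq V] (A : V → V → Prop) (S : Finset V) : Prop :=
  DomG A S ∧ ∀ v : V, v ∉ S → ∃ u ∈ S, (A u v ∨ A v u) ∧ DomG A (insert v (S.erase u))

/-- Out-secure dominating set (OSDS). -/
def OSDS [DecidableEq V] (A : V → V → Prop) (S : Finset V) : Prop :=
  DomG A S ∧ ∀ v : V, v ∉ S → ∃ u ∈ S, A u v ∧ DomG A (insert v (S.erase u))

/-- Secure out-dominating set (SODS). -/
def SODS [DecidableEq V] (A : V → V → Prop) (S : Finset V) : Prop :=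
  OutDom A S ∧ ∀ v : V, v ∉ S → ∃ u ∈ S, (A v u ∨ A u v) ∧ OutDom A (insert v (S.erase u))

/-- Out-secure out-dominating set (OSODS). -/
def OSODS [DecidableEq V] (A : V → V → Prop) (S : Finset V) : Prop :=
  OutDom A S ∧ ∀ v : V, v ∉ S → ∃ u ∈ S, A u v ∧ OutDom A (insert v (S.erase u))

/-- In-secure out-dominating set (ISODS). -/
def ISODS [DecidableEq V] (A : V → V → Prop) (S : Finset V) : Prop :=
  OutDom A S ∧ ∀ v : V, v ∉ S → ∃ u ∈ S, A v u ∧ OutDom A (insert v (S.erase u))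

/-- Twin dominating set. -/
def TwinDom (A : V → V → Prop) (S : Finset V) : Prop :=
  ∀ v : V, v ∉ S → (∃ u ∈ S, A v u) ∧ (∃ u ∈ S, A u v)

/-- The out-domination number `γ⁺`. -/
noncomputable def gammaPlus [Fintype V] (A : V → V → Prop) : ℕ :=
  sInf {k | ∃ S : Finset V, OutDom A S ∧ S.card = k}

/-- The in-domination number `γ⁻`. -/
noncomputable def gammaMinus [Fintype V] (A : V → V → Prop) : ℕ :=
  sInf {k | ∃ S : Finset V, InDom A S ∧ S.card = k}

/-- The secure domination number of the underlying undirected graph, `γ_s`. -/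
noncomputable def gammaS [Fintype V] [DecidableEq V] (A : V → V → Prop) : ℕ :=
  sInf {k | ∃ S : Finset V, SDS A S ∧ S.card = k}

/-- The out-secure domination number `γ_os`. -/
noncomputable def gammaOS [Fintype V] [DecidableEq V] (A : V → V → Prop) : ℕ :=
  sInf {k | ∃ S : Finset V, OSDS A S ∧ S.card = k}

/-- The secure out-domination number `γ_so`. -/
noncomputable def gammaSO [Fintype V] [DecidableEq V] (A : V → V → Prop) : ℕ :=
  sInf {k | ∃ S : Finset V, SODS A S ∧ S.card = k}

/-- The out-secure out-domination number `γ_oso`. -/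
noncomputable def gammaOSO [Fintype V] [DecidableEq V] (A : V → V → Prop) : ℕ :=
  sInf {k | ∃ S : Finset V, OSODS A S ∧ S.card = k}

/-- The in-secure out-domination number `γ_iso`. -/
noncomputable def gammaISO [Fintype V] [DecidableEq V] (A : V → V → Prop) : ℕ :=
  sInf {k | ∃ S : Finset V, ISODS A S ∧ S.card = k}

/-- The twin domination number `γ*`. -/
noncomputable def gammaTwin [Fintype V] (A : V → V → Prop) : ℕ :=
  sInf {k | ∃ S : Finset V, TwinDom A S ∧ S.card = k}

/-- Out-degree `d⁺(u)`. -/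
noncomputable def outDeg (A : V → V → Prop) (u : V) : ℕ := Nat.card {v | A u v}

/-- In-degree `d⁻(u)`. -/
noncomputable def inDeg (A : V → V → Prop) (u : V) : ℕ := Nat.card {v | A v u}

/-- Maximum out-degree `Δ⁺`. -/
noncomputable def maxOutDeg [Fintype V] (A : V → V → Prop) : ℕ :=
  Finset.univ.sup fun u => outDeg A u

/-- Minimum out-degree `δ⁺`. -/
noncomputable def minOutDeg (A : V → V → Prop) : ℕ := sInf (Set.range fun u => outDeg A u)

/-- Minimum in-degree `δ⁻`. -/
noncomputable def minInDeg (A : V → V → Prop) : ℕ := sInf (Set.range fun u => inDeg A u)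

/-- The set of out-private neighbors `pn⁺(u,S)`: vertices `w` with `N⁻[w] ∩ S = {u}`. -/
def pnPlus (A : V → V → Prop) (S : Finset V) (u : V) : Set V :=
  {w | {x | A x w ∨ x = w} ∩ ↑S = {u}}

/-- The set of in-private neighbors `pn⁻(u,S)`: vertices `w` with `N⁺[w] ∩ S = {u}`. -/
def pnMinus (A : V → V → Prop) (S : Finset V) (u : V) : Set V :=
  {w | {x | A w x ∨ x = w} ∩ ↑S = {u}}

/-- `A` is an orientation of the simple graph `G`. -/
def IsOrientation (G : SimpleGraph V) (A : V → V → Prop) : Prop :=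
  (∀ u v : V, G.Adj u v ↔ (A u v ∨ A v u)) ∧ (∀ u v : V, A u v → ¬ A v u)

/-- The arc relation of the directed path `P_n` on `Fin n`. -/
def pathArc (n : ℕ) : Fin n → Fin n → Prop := fun i j => (i : ℕ) + 1 = (j : ℕ)

/-- The arc relation of the directed cycle `C_n` on `Fin n`. -/
def cycleArc (n : ℕ) : Fin n → Fin n → Prop := fun i j => ((i : ℕ) + 1) % n = (j : ℕ)

/-- `G` is a bipartite graph. -/
def IsBip (G : SimpleGraph V) : Prop :=
  ∃ X : Set V, ∀ u v : V, G.Adj u v → (u ∈ X ↔ v ∉ X)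

/-- A digraph in which every vertex is a source or a sink, encoded as the absence of two
consecutive arcs. The digraphs of maximal `γ_oso` turn out to be of this kind. -/
def IsSourceSink (A : V → V → Prop) : Prop :=
  ∀ ⦃u v w : V⦄, A u v → ¬ A v w

/-- The digraph whose arcs are the edges of `G` directed away from their endpoints in `X`. It is an
orientation of `G` when `X` is one side of a bipartition; in general an edge inside `X` gives two
opposite arcs and an edge outside `X` gives none. -/
def orientFrom (G : SimpleGraph V) (X : Set V) (u v : V) : Prop :=
  G.Adj u v ∧ u ∈ X

section OSODS

variable [DecidableEq V] {A : V → V → Prop} {S : Finset V}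

lemma IsSourceSink.mem_of_osods (hA : IsSourceSink A) (hS : OSODS A S) (v : V) : v ∈ S := by
  by_contra hv
  obtain ⟨u, hu, huv, hdom⟩ := hS.2 v hv
  have hne : u ≠ v := ne_of_mem_of_not_mem hu hv
  obtain ⟨x, -, hxu⟩ := hdom u (by simp [hne])
  exact hA hxu huv

variable [Fintype V]

lemma osods_univ (A : V → V → Prop) : OSODS A univ :=
  ⟨fun v hv => absurd (mem_univ v) hv, fun v hv => absurd (mem_univ v) hv⟩

lemma osods_univ_erase {u v w : V} (hne : u ≠ v) (hne' : v ≠ w) (huv : A u v) (hvw : A v w) :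
    OSODS A (univ.erase w) := by
  have hv : v ∈ univ.erase w := mem_erase.2 ⟨hne', mem_univ v⟩
  have eq_of_notMem {x : V} (hx : x ∉ univ.erase w) : x = w := by simpa using hx
  have hmove : OutDom A (insert w ((univ.erase w).erase v)) := by
    intro y hy
    obtain rfl : y = v := by grind
    exact ⟨u, by grind, huv⟩
  refine ⟨fun x hx => ?_, fun x hx => ?_⟩ <;> obtain rfl := eq_of_notMem hx
  · exact ⟨v, hv, hvw⟩
  · exact ⟨v, hv, hvw, hmove⟩

lemma OSODS.gammaOSO_le_card (hS : OSODS A S) : gammaOSO A ≤ #S :=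
  Nat.sInf_le ⟨S, hS, rfl⟩

lemma exists_osods_card_eq_gammaOSO (A : V → V → Prop) :
    ∃ S : Finset V, OSODS A S ∧ #S = gammaOSO A := by
  have hne : {k | ∃ S : Finset V, OSODS A S ∧ #S = k}.Nonempty := ⟨_, univ, osods_univ A, rfl⟩
  exact Nat.sInf_mem hne

lemma gammaOSO_eq_card_iff_forall_eq_univ :
    gammaOSO A = Fintype.card V ↔ ∀ S : Finset V, OSODS A S → S = univ := by
  constructor
  · intro hγ S hS
    rw [← card_eq_iff_eq_univ]
    exact (card_le_univ S).antisymm (hγ ▸ hS.gammaOSO_le_card)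
  · intro h
    obtain ⟨S, hS, hcard⟩ := exists_osods_card_eq_gammaOSO A
    rw [← hcard, h S hS, card_univ]

theorem gammaOSO_eq_card_iff_isSourceSink (hA : ∀ v, ¬ A v v) :
    gammaOSO A = Fintype.card V ↔ IsSourceSink A := by
  rw [gammaOSO_eq_card_iff_forall_eq_univ]
  constructor
  · intro h u v w huv hvw
    have hne : u ≠ v := fun huv' => hA v (huv' ▸ huv)
    have hne' : v ≠ w := fun hvw' => hA w (hvw' ▸ hvw)
    have huniv : univ.erase w = univ := h _ (osods_univ_erase hne hne' huv hvw)
    exact erase_eq_self.1 huniv (mem_univ w)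
  · exact fun hss S hS => eq_univ_iff_forall.2 (hss.mem_of_osods hS)

end OSODS

section Bipartite

variable {G : SimpleGraph V} {A : V → V → Prop} {X : Set V}

lemma IsOrientation.irrefl (hA : IsOrientation G A) (v : V) : ¬ A v v :=
  fun hv => hA.2 v v hv hv

lemma IsSourceSink.isBip (hss : IsSourceSink A) (hA : IsOrientation G A) : IsBip G := by
  refine ⟨{x | ∃ y, A x y}, fun u v huv => ?_⟩
  rcases (hA.1 u v).1 huv with h | h
  · exact iff_of_true ⟨v, h⟩ fun ⟨_, hvw⟩ => hss h hvw
  · exact iff_of_false (fun ⟨_, huw⟩ => hss h huw) (not_not_intro ⟨u, h⟩)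

lemma isSourceSink_orientFrom (hX : G.IsIndepSet X) : IsSourceSink (orientFrom G X) :=
  fun _ _ _ ⟨huv, hu⟩ ⟨_, hv⟩ => hX hu hv huv.ne huv

lemma isOrientation_orientFrom (hX : ∀ u v : V, G.Adj u v → (u ∈ X ↔ v ∉ X)) :
    IsOrientation G (orientFrom G X) := by
  refine ⟨fun u v => ⟨fun huv => ?_, ?_⟩, fun u v ⟨huv, hu⟩ ⟨_, hv⟩ => (hX u v huv).1 hu hv⟩
  · by_cases hv : v ∈ X
    · exact Or.inr ⟨huv.symm, hv⟩
    · exact Or.inl ⟨huv, (hX u v huv).2 hv⟩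
  · rintro (⟨huv, -⟩ | ⟨hvu, -⟩)
    exacts [huv, hvu.symm]

theorem exists_isOrientation_isSourceSink_iff_isBip :
    (∃ A : V → V → Prop, IsOrientation G A ∧ IsSourceSink A) ↔ IsBip G := by
  constructor
  · rintro ⟨A, hA, hss⟩
    exact hss.isBip hA
  · rintro ⟨X, hX⟩
    have hindep : G.IsIndepSet X := fun u hu v hv _ huv => (hX u v huv).1 hu hv
    exact ⟨orientFrom G X, isOrientation_orientFrom hX, isSourceSink_orientFrom hindep⟩

end Bipartite

/-- a nontrivial graph admits an orientation with `γ_oso = n` iff it is bipartite. -/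
theorem stmt_5 [Fintype V] [DecidableEq V] (G : SimpleGraph V) (hn : 2 ≤ Fintype.card V) :
    (∃ A : V → V → Prop, IsOrientation G A ∧ gammaOSO A = Fintype.card V) ↔ IsBip G := by
  rw [← exists_isOrientation_isSourceSink_iff_isBip]
  exact exists_congr fun A =>
    and_congr_right fun hA => gammaOSO_eq_card_iff_isSourceSink hA.irrefl
end

section
/- Let D be any digraph without symmetric arcs (no pair of opposite arcs). Then γ_os(D) ≤ γ⁺(D) + γ⁻(D). -/
/-!
A minimum out-dominating set and a minimum in-dominating set together form a twin dominating set
`S`: every vertex outside `S` has both an in-neighbor and an out-neighbor in `S`. Without symmetric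
arcs these two neighbors are distinct, so moving one guard `u ∈ S` to any neighbor `v` of `u` leaves
every other vertex outside `S` with a guard next to it, while `u` itself is now guarded from `v`.
-/

open Finset

variable {V : Type*}

section

variable {A : V → V → Prop} {S T : Finset V} {u v : V}

theorem TwinDom.domG (hS : TwinDom A S) : DomG A S := fun w hw =>
  let ⟨x, hx, hxw⟩ := (hS w hw).2
  ⟨x, hx, Or.inl hxw⟩

theorem TwinDom.exists_ne_adj (hS : TwinDom A S) (hu : ∀ w, A w u → ¬ A u w) (hv : v ∉ S) :
    ∃ x ∈ S, x ≠ u ∧ (A x v ∨ A v x) := by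
  obtain ⟨⟨x, hx, hvx⟩, y, hy, hyv⟩ := hS v hv
  by_cases hxu : x = u
  · have hyu : y ≠ u := fun hyu => hu v (hxu ▸ hvx) (hyu ▸ hyv)
    exact ⟨y, hy, hyu, Or.inl hyv⟩
  · exact ⟨x, hx, hxu, Or.inr hvx⟩

theorem TwinDom.domG_insert_erase [DecidableEq V] (hS : TwinDom A S)
    (hu : ∀ w, A w u → ¬ A u w) (huv : A u v ∨ A v u) : DomG A (insert v (S.erase u)) := by
  intro w hw
  by_cases hwu : w = u
  · exact ⟨v, mem_insert_self v _, hwu ▸ huv.symm⟩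
  · have hwS : w ∉ S := fun h => hw (mem_insert_of_mem (mem_erase.2 ⟨hwu, h⟩))
    obtain ⟨x, hx, hxu, hxw⟩ := hS.exists_ne_adj hu hwS
    exact ⟨x, mem_insert_of_mem (mem_erase.2 ⟨hxu, hx⟩), hxw⟩

theorem TwinDom.osds [DecidableEq V] (hS : TwinDom A S) (hsym : ∀ u v, A u v → ¬ A v u) :
    OSDS A S := by
  refine ⟨hS.domG, fun v hv => ?_⟩
  obtain ⟨u, hu, huv⟩ := (hS v hv).2
  exact ⟨u, hu, huv, hS.domG_insert_erase (fun w => hsym w u) (Or.inl huv)⟩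

theorem OutDom.twinDom_union [DecidableEq V] (hS : OutDom A S) (hT : InDom A T) :
    TwinDom A (S ∪ T) := by
  intro v hv
  rw [notMem_union] at hv
  obtain ⟨x, hx, hxv⟩ := hS v hv.1
  obtain ⟨y, hy, hvy⟩ := hT v hv.2
  exact ⟨⟨y, mem_union_right S hy, hvy⟩, x, mem_union_left T hx, hxv⟩

end

section

variable [Fintype V] (A : V → V → Prop)

theorem exists_outDom_card_eq_gammaPlus : ∃ S : Finset V, OutDom A S ∧ S.card = gammaPlus A :=
  Nat.sInf_mem (s := {k | ∃ S : Finset V, OutDom A S ∧ S.card = k})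
    ⟨_, univ, fun v hv => absurd (mem_univ v) hv, rfl⟩

theorem exists_inDom_card_eq_gammaMinus : ∃ S : Finset V, InDom A S ∧ S.card = gammaMinus A :=
  Nat.sInf_mem (s := {k | ∃ S : Finset V, InDom A S ∧ S.card = k})
    ⟨_, univ, fun v hv => absurd (mem_univ v) hv, rfl⟩

theorem exists_twinDom_card_eq_gammaTwin : ∃ S : Finset V, TwinDom A S ∧ S.card = gammaTwin A :=
  Nat.sInf_mem (s := {k | ∃ S : Finset V, TwinDom A S ∧ S.card = k})
    ⟨_, univ, fun v hv => absurd (mem_univ v) hv, rfl⟩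

theorem gammaTwin_le_gammaPlus_add_gammaMinus : gammaTwin A ≤ gammaPlus A + gammaMinus A := by
  classical
  obtain ⟨S, hS, hS_card⟩ := exists_outDom_card_eq_gammaPlus A
  obtain ⟨T, hT, hT_card⟩ := exists_inDom_card_eq_gammaMinus A
  calc gammaTwin A ≤ (S ∪ T).card := Nat.sInf_le ⟨S ∪ T, hS.twinDom_union hT, rfl⟩
    _ ≤ S.card + T.card := card_union_le S T
    _ = gammaPlus A + gammaMinus A := by rw [hS_card, hT_card]

variable {A} in
theorem gammaOS_le_gammaTwin [DecidableEq V] (hsym : ∀ u v, A u v → ¬ A v u) :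
    gammaOS A ≤ gammaTwin A := by
  obtain ⟨S, hS, hS_card⟩ := exists_twinDom_card_eq_gammaTwin A
  exact Nat.sInf_le ⟨S, hS.osds hsym, hS_card⟩

end

/-- `γ_os(D) ≤ γ⁺(D) + γ⁻(D)` for digraphs without symmetric arcs. -/
theorem stmt_13 [Fintype V] [DecidableEq V] (A : V → V → Prop) (hloop : ∀ v : V, ¬ A v v)
    (hsym : ∀ u v : V, A u v → ¬ A v u) :
    gammaOS A ≤ gammaPlus A + gammaMinus A :=
  (gammaOS_le_gammaTwin hsym).trans (gammaTwin_le_gammaPlus_add_gammaMinus A)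
end

section
/- For any digraph D of order n ≥ 2 with no isolated vertices in its underlying undirected graph, γ_os(D) ≤ n−1. Moreover, if D is connected (its underlying undirected graph is connected), then γ_os(D) = n−1 if, and only if, D is the directed cycle C₃ or the underlying undirected graph of D is a star. -/
/-!
If `T` is the set of heads of pairwise disjoint arcs, then `V ∖ T` is an out-secure dominating
set: exchanging a head for its tail leaves an endpoint of every arc in the set. One arc gives
`γ_os ≤ n − 1`. If `γ_os = n − 1` there are no two disjoint arcs, so the endpoints of each edge
cover all edges, and a graph with this property and without isolated vertices is a star or a
triangle. In a triangle, a vertex with arcs to both others would form an out-secure dominating set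
on its own, and without such a vertex the triangle is a directed cycle.

Conversely, let `S` be an out-secure dominating set. In `C₃` distinct vertices outside `S` are
defended by distinct vertices of `S`, so `3 ≤ 2|S|`. In a star, `S` cannot miss two vertices: if it
misses the center and a leaf, nothing dominates the leaf, and if it misses two leaves, the center
has to move to defend one of them and leaves the other undominated.
-/

open Finset

variable {V : Type*}

section Bounds

variable {A : V → V → Prop} {S T : Finset V} {a b c d : V}

lemma domG_of_fromRel_eq_top (hA : SimpleGraph.fromRel A = ⊤) (hS : S.Nonempty) : DomG A S := by
  obtain ⟨u, hu⟩ := hS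
  intro v hv
  have huv : (SimpleGraph.fromRel A).Adj u v := by
    rw [hA]
    exact ne_of_mem_of_not_mem hu hv
  exact ⟨u, hu, huv.2⟩

lemma OutDom.card_le_two_mul_card [Fintype V] (hS : OutDom A S) (hA : Relator.RightUnique A) :
    Fintype.card V ≤ 2 * #S := by
  classical
  have hle : #Sᶜ ≤ #S := card_le_card_of_forall_subsingleton (fun v u => A u v)
    (fun v hv => hS v (mem_compl.1 hv)) (fun _ _ _ hv _ hw => hA hv.2 hw.2)
  have hcard : #S + #Sᶜ = Fintype.card V := card_add_card_compl S
  lia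

variable [DecidableEq V]

lemma OSDS.outDom (hS : OSDS A S) : OutDom A S := fun v hv =>
  let ⟨u, hu, huv, _⟩ := hS.2 v hv
  ⟨u, hu, huv⟩

lemma osds_compl_of_injOn [Fintype V] {tail : V → V} (hmem : ∀ v ∈ T, tail v ∉ T)
    (hinj : Set.InjOn tail T) (harc : ∀ v ∈ T, A (tail v) v) : OSDS A Tᶜ := by
  have htail : ∀ v ∈ T, tail v ∈ Tᶜ := fun v hv => mem_compl.2 (hmem v hv)
  refine ⟨fun v hv => ?_, fun v hv => ?_⟩ <;> rw [notMem_compl] at hv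
  · exact ⟨tail v, htail v hv, .inl (harc v hv)⟩
  refine ⟨tail v, htail v hv, harc v hv, fun w hw => ?_⟩
  simp only [mem_insert, mem_erase, mem_compl, not_or, not_and, not_not] at hw
  by_cases hwv : w = tail v
  · exact ⟨v, mem_insert_self _ _, .inr (hwv ▸ harc v hv)⟩
  · have hwT : w ∈ T := hw.2 hwv
    have hne : tail w ≠ tail v := hinj.ne hwT hv hw.1
    exact ⟨tail w, mem_insert_of_mem (mem_erase.2 ⟨hne, htail w hwT⟩), .inl (harc w hwT)⟩

lemma osds_singleton_of_fromRel_eq_top (hA : SimpleGraph.fromRel A = ⊤)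
    (ha : ∀ v, v ≠ a → A a v) : OSDS A {a} :=
  ⟨domG_of_fromRel_eq_top hA (singleton_nonempty a), fun v hv =>
    ⟨a, mem_singleton_self a, ha v (by simpa using hv),
      domG_of_fromRel_eq_top hA (insert_nonempty v _)⟩⟩

variable [Fintype V]

lemma gammaOS_le_card (hS : OSDS A S) : gammaOS A ≤ #S :=
  Nat.sInf_le ⟨S, hS, rfl⟩

lemma exists_osds_card_eq_gammaOS (A : V → V → Prop) : ∃ S, OSDS A S ∧ #S = gammaOS A := by
  have huniv : OSDS A univ := by simp [OSDS, DomG]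
  exact Nat.sInf_mem (s := {k | ∃ S : Finset V, OSDS A S ∧ #S = k}) ⟨_, univ, huniv, rfl⟩

lemma gammaOS_add_card_le {tail : V → V} (hmem : ∀ v ∈ T, tail v ∉ T)
    (hinj : Set.InjOn tail T) (harc : ∀ v ∈ T, A (tail v) v) :
    gammaOS A + #T ≤ Fintype.card V := by
  have hle : gammaOS A ≤ #Tᶜ := gammaOS_le_card (osds_compl_of_injOn hmem hinj harc)
  have hcard : #T + #Tᶜ = Fintype.card V := card_add_card_compl T
  lia

lemma gammaOS_lt_card (hab : (SimpleGraph.fromRel A).Adj a b) : gammaOS A < Fintype.card V := by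
  have hlt : ∀ {u v}, u ≠ v → A u v → gammaOS A < Fintype.card V := fun {u v} hne huv => by
    simpa using!
      gammaOS_add_card_le (T := {v}) (tail := fun _ => u) (by simpa) (by simp) (by simpa)
  exact hab.2.elim (hlt hab.ne) (hlt hab.ne')

lemma gammaOS_add_two_le (hab : A a b) (hcd : A c d) (hnodup : [a, b, c, d].Nodup) :
    gammaOS A + 2 ≤ Fintype.card V := by
  have hbd : b ≠ d := by grind
  rw [← card_pair hbd]
  refine gammaOS_add_card_le (tail := fun v => if v = b then a else c) ?_ ?_ ?_
  · grind
  · simp only [Set.InjOn]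
    grind
  · grind

lemma card_le_two_mul_gammaOS (hA : Relator.RightUnique A) : Fintype.card V ≤ 2 * gammaOS A := by
  obtain ⟨S, hS, hcard⟩ := exists_osds_card_eq_gammaOS A
  exact hcard ▸ hS.outDom.card_le_two_mul_card hA

lemma OSDS.card_compl_le_one (hS : OSDS A S) (hc : (SimpleGraph.fromRel A).IsVertexCover {c}) :
    #Sᶜ ≤ 1 := by
  have hmeet : ∀ {u v}, u ≠ v → A u v ∨ A v u → u = c ∨ v = c := fun hne h => hc ⟨hne, h⟩
  refine card_le_one.2 fun a ha b hb => ?_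
  rw [mem_compl] at ha hb
  by_contra hab
  obtain ⟨u, hu, hua, hdom⟩ := hS.2 a ha
  rcases hmeet (ne_of_mem_of_not_mem hu ha) (.inl hua) with rfl | rfl
  · have hb' : b ∉ insert a (S.erase u) := by grind
    obtain ⟨x, hx, hxb⟩ := hdom b hb'
    have hcover := hmeet (ne_of_mem_of_not_mem hx hb') hxb
    grind
  · obtain ⟨w, hw, hwb⟩ := hS.1 b hb
    have hcover := hmeet (ne_of_mem_of_not_mem hw hb) hwb
    grind

lemma card_sub_one_le_gammaOS_of_isVertexCover
    (hc : (SimpleGraph.fromRel A).IsVertexCover {c}) : Fintype.card V - 1 ≤ gammaOS A := by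
  obtain ⟨S, hS, hγ⟩ := exists_osds_card_eq_gammaOS A
  have hle : #Sᶜ ≤ 1 := hS.card_compl_le_one hc
  have hcard : #S + #Sᶜ = Fintype.card V := card_add_card_compl S
  lia

lemma isVertexCover_pair_of_card_sub_one_le_gammaOS (hγ : Fintype.card V - 1 ≤ gammaOS A)
    (hab : (SimpleGraph.fromRel A).Adj a b) : (SimpleGraph.fromRel A).IsVertexCover {a, b} := by
  rintro c d hcd
  by_contra hdisj
  have hpos : 0 < Fintype.card V := Fintype.card_pos_iff.2 ⟨a⟩
  have harcs : ∀ {p q r s}, A p q → A r s → ¬ [p, q, r, s].Nodup := fun hpq hrs hnodup => by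
    have := gammaOS_add_two_le hpq hrs hnodup
    lia
  rcases hab.2 with h | h <;> rcases hcd.2 with h' | h' <;> grind [hab.ne, hcd.ne]

end Bounds

section UnderlyingGraph

variable {G : SimpleGraph V} {a b c : V}

lemma eq_starGraph_of_isVertexCover (hG : ∀ v, ∃ w, G.Adj v w) (hc : G.IsVertexCover {c}) :
    G = SimpleGraph.starGraph c := by
  have hadj : ∀ v, v ≠ c → G.Adj v c := fun v hv => by
    obtain ⟨w, hw⟩ := hG v
    obtain rfl : w = c := (hc hw).resolve_left hv
    exact hw
  ext u v
  rw [SimpleGraph.starGraph_adj]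
  refine ⟨fun h => ⟨h.ne, hc h⟩, ?_⟩
  rintro ⟨hne, rfl | rfl⟩
  · exact (hadj v hne.symm).symm
  · exact hadj u hne

lemma exists_adj_ne_of_not_isVertexCover (hab : G.IsVertexCover {a, b})
    (ha : ¬ G.IsVertexCover {a}) : ∃ x, x ≠ a ∧ G.Adj b x := by
  simp only [SimpleGraph.IsVertexCover, Set.mem_singleton_iff, not_forall, not_or] at ha
  obtain ⟨p, q, hpq, hp, hq⟩ := ha
  rcases hab hpq with (h | h) | (h | h)
  · exact absurd h hp
  · exact ⟨q, hq, h ▸ hpq⟩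
  · exact absurd h hq
  · exact ⟨p, hp, h ▸ hpq.symm⟩

lemma eq_top_and_card_eq_three_of_not_isVertexCover
    (hG : ∀ v, ∃ w, G.Adj v w) (hcover : ∀ ⦃a b⦄, G.Adj a b → G.IsVertexCover {a, b})
    (hab : G.Adj a b) (ha : ¬ G.IsVertexCover {a}) (hb : ¬ G.IsVertexCover {b}) :
    G = ⊤ ∧ Nat.card V = 3 := by
  obtain ⟨x, hxa, hbx⟩ := exists_adj_ne_of_not_isVertexCover (hcover hab) ha
  obtain ⟨y, hyb, hay⟩ := exists_adj_ne_of_not_isVertexCover (hcover hab.symm) hb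
  obtain rfl : x = y := by
    have h := hcover hay hbx
    have hba : b ≠ a := hab.ne'
    grind
  have hall : ∀ v, v = a ∨ v = b ∨ v = x := by
    intro v
    obtain ⟨w, hvw⟩ := hG v
    have h₁ := hcover hab hvw
    have h₂ := hcover hbx hvw
    have h₃ := hcover hay hvw
    grind [hab.ne, hbx.ne, hay.ne]
  constructor
  · ext u v
    rw [SimpleGraph.top_adj]
    refine ⟨SimpleGraph.Adj.ne, fun hne => ?_⟩
    rcases hall u with rfl | rfl | rfl <;> rcases hall v with rfl | rfl | rfl <;>
      simp_all [SimpleGraph.adj_comm]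
  · have huniv : (Set.univ : Set V) = {a, b, x} := by
      ext v
      simpa using hall v
    rw [← Set.ncard_univ, huniv]
    exact Set.ncard_eq_three.2 ⟨a, b, x, hab.ne, hay.ne, hbx.ne, rfl⟩

lemma eq_starGraph_or_eq_top [Nonempty V] (hG : ∀ v, ∃ w, G.Adj v w)
    (hcover : ∀ ⦃a b⦄, G.Adj a b → G.IsVertexCover {a, b}) :
    (∃ c, G = SimpleGraph.starGraph c) ∨ (G = ⊤ ∧ Nat.card V = 3) := by
  obtain ⟨a⟩ := ‹Nonempty V›
  obtain ⟨b, hab⟩ := hG a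
  by_cases ha : G.IsVertexCover {a}
  · exact .inl ⟨a, eq_starGraph_of_isVertexCover hG ha⟩
  by_cases hb : G.IsVertexCover {b}
  · exact .inl ⟨b, eq_starGraph_of_isVertexCover hG hb⟩
  exact .inr (eq_top_and_card_eq_three_of_not_isVertexCover hG hcover hab ha hb)

end UnderlyingGraph

section DirectedTriangle

variable {A : V → V → Prop}

lemma rightUnique_cycleArc (n : ℕ) : Relator.RightUnique (cycleArc n) :=
  fun _ _ _ hb hc => Fin.ext (hb.symm.trans hc)

lemma exists_forall_eq_or_eq_or_eq (hcard : Nat.card V = 3) {a b : V} (hab : a ≠ b) :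
    ∃ c, a ≠ c ∧ b ≠ c ∧ ∀ v, v = a ∨ v = b ∨ v = c := by
  have : Finite V := (Nat.card_pos_iff.1 (by lia)).2
  have hcompl : ({a, b}ᶜ : Set V).ncard = 1 := by
    rw [Set.ncard_compl, Set.ncard_pair hab, hcard]
  obtain ⟨c, hc⟩ := Set.ncard_eq_one.1 hcompl
  have hmem : ∀ v, ¬(v = a ∨ v = b) ↔ v = c := Set.ext_iff.1 hc
  obtain ⟨hca, hcb⟩ := not_or.1 ((hmem c).2 rfl)
  exact ⟨c, Ne.symm hca, Ne.symm hcb, fun v => by grind only [hmem v]⟩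

lemma nonempty_relIso_cycleArc_three (hloop : ∀ v, ¬ A v v) (hcard : Nat.card V = 3)
    (hA : SimpleGraph.fromRel A = ⊤) (hout : ∀ a, ∃ v, v ≠ a ∧ ¬ A a v) :
    Nonempty (A ≃r cycleArc 3) := by
  have harc : ∀ {u v}, u ≠ v → A u v ∨ A v u := fun {u v} hne => by
    have huv : (SimpleGraph.fromRel A).Adj u v := hA ▸ hne
    exact huv.2
  obtain ⟨b⟩ : Nonempty V := (Nat.card_pos_iff.1 (by lia)).1
  obtain ⟨a, hab, hnba⟩ := hout b
  obtain ⟨c, hac, hbc, hall⟩ := exists_forall_eq_or_eq_or_eq hcard hab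
  have hnot : ∀ {u v w}, (∀ x, x = u ∨ x = v ∨ x = w) → A u v → ¬ A u w := by
    intro u v w hx huv huw
    obtain ⟨x, hne, hnarc⟩ := hout u
    rcases hx x with rfl | rfl | rfl <;> contradiction
  have hA_ab : A a b := (harc hab).resolve_right hnba
  have hnac : ¬ A a c := hnot hall hA_ab
  have hA_ca : A c a := (harc hac).resolve_left hnac
  have hncb : ¬ A c b := hnot (fun v => or_rotate.2 (hall v)) hA_ca
  have hA_bc : A b c := (harc hbc).resolve_right hncb
  have hbij : Function.Bijective ![a, b, c] := by
    constructor
    · intro i j hij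
      fin_cases i <;> fin_cases j <;> simp_all
    · intro v
      rcases hall v with rfl | rfl | rfl
      exacts [⟨0, rfl⟩, ⟨1, rfl⟩, ⟨2, rfl⟩]
  have hiff : ∀ i j, A (![a, b, c] i) (![a, b, c] j) ↔ cycleArc 3 i j := by
    intro i j
    fin_cases i <;> fin_cases j <;> simp [*, cycleArc]
  exact ⟨(⟨Equiv.ofBijective _ hbij, hiff _ _⟩ : cycleArc 3 ≃r A).symm⟩

lemma exists_equiv_iff_nonempty_relIso_cycleArc {n : ℕ} :
    (∃ e : V ≃ Fin n, ∀ u v, A u v ↔ ((e u : ℕ) + 1) % n = (e v : ℕ)) ↔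
      Nonempty (A ≃r cycleArc n) :=
  ⟨fun ⟨e, he⟩ => ⟨⟨e, (he _ _).symm⟩⟩, fun ⟨f⟩ => ⟨f.toEquiv, fun _ _ => f.map_rel_iff.symm⟩⟩

lemma card_sub_one_le_gammaOS_of_relIso [Fintype V] [DecidableEq V] (f : A ≃r cycleArc 3) :
    Fintype.card V - 1 ≤ gammaOS A := by
  have hcard : Fintype.card V = 3 := Fintype.card_eq.2 ⟨f.toEquiv⟩
  have hA : Relator.RightUnique A := fun _ _ _ huv huw =>
    f.injective (rightUnique_cycleArc 3 (f.map_rel_iff.2 huv) (f.map_rel_iff.2 huw))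
  have hle : Fintype.card V ≤ 2 * gammaOS A := card_le_two_mul_gammaOS hA
  lia

end DirectedTriangle

section Extremal

variable {A : V → V → Prop}

lemma fromRel_eq_starGraph_iff (hloop : ∀ v, ¬ A v v) (c : V) :
    SimpleGraph.fromRel A = SimpleGraph.starGraph c ↔
      ∀ u v, (A u v ∨ A v u) ↔ ((u = c ∧ v ≠ c) ∨ (v = c ∧ u ≠ c)) := by
  simp only [SimpleGraph.ext_iff, funext_iff, SimpleGraph.fromRel_adj, SimpleGraph.starGraph_adj,
    eq_iff_iff]
  refine forall₂_congr fun u v => ?_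
  grind

variable [Fintype V] [DecidableEq V]

lemma relIso_cycleArc_or_eq_starGraph [Nonempty V] (hloop : ∀ v, ¬ A v v)
    (hG : ∀ v, ∃ w, (SimpleGraph.fromRel A).Adj v w) (hγ : Fintype.card V - 1 ≤ gammaOS A) :
    Nonempty (A ≃r cycleArc 3) ∨ ∃ c, SimpleGraph.fromRel A = SimpleGraph.starGraph c := by
  rcases eq_starGraph_or_eq_top hG fun _ _ =>
      isVertexCover_pair_of_card_sub_one_le_gammaOS hγ with hstar | ⟨htop, hcard⟩
  · exact .inr hstar
  refine .inl (nonempty_relIso_cycleArc_three hloop hcard htop fun a => ?_)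
  by_contra! hdom
  have hle : gammaOS A ≤ 1 := by
    simpa using! gammaOS_le_card (osds_singleton_of_fromRel_eq_top htop hdom)
  rw [Nat.card_eq_fintype_card] at hcard
  lia

lemma card_sub_one_le_gammaOS_of_eq_starGraph {c : V}
    (hc : SimpleGraph.fromRel A = SimpleGraph.starGraph c) : Fintype.card V - 1 ≤ gammaOS A :=
  card_sub_one_le_gammaOS_of_isVertexCover (c := c) fun _ _ huv =>
    (SimpleGraph.starGraph_adj.1 (hc ▸ huv)).2

end Extremal

theorem stmt_14_general [Fintype V] [DecidableEq V] [Nonempty V] (A : V → V → Prop)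
    (hloop : ∀ v : V, ¬ A v v) (hniso : ∀ v : V, ∃ u : V, u ≠ v ∧ (A u v ∨ A v u)) :
    gammaOS A ≤ Fintype.card V - 1 ∧
    (gammaOS A = Fintype.card V - 1 ↔
      ((∃ e : V ≃ Fin 3, ∀ u v : V, A u v ↔ ((e u : ℕ) + 1) % 3 = (e v : ℕ)) ∨
       (∃ c : V, ∀ u v : V, (A u v ∨ A v u) ↔
          ((u = c ∧ v ≠ c) ∨ (v = c ∧ u ≠ c))))) := by
  have hG : ∀ v, ∃ w, (SimpleGraph.fromRel A).Adj v w := fun v =>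
    (hniso v).imp fun _ hu => ⟨hu.1.symm, hu.2.symm⟩
  have hle : gammaOS A ≤ Fintype.card V - 1 := by
    obtain ⟨v⟩ := ‹Nonempty V›
    obtain ⟨w, hvw⟩ := hG v
    exact Nat.le_sub_one_of_lt (gammaOS_lt_card hvw)
  simp_rw [exists_equiv_iff_nonempty_relIso_cycleArc, ← fromRel_eq_starGraph_iff hloop]
  refine ⟨hle, fun hγ => relIso_cycleArc_or_eq_starGraph hloop hG hγ.ge, ?_⟩
  rintro (⟨⟨f⟩⟩ | ⟨c, hc⟩)
  · exact hle.antisymm (card_sub_one_le_gammaOS_of_relIso f)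
  · exact hle.antisymm (card_sub_one_le_gammaOS_of_eq_starGraph hc)

/-- `γ_os(D) ≤ n − 1`; for connected `D`, equality holds iff `D` is the directed
cycle `C₃` or the underlying graph of `D` is a star. -/
theorem stmt_14 [Fintype V] [DecidableEq V] (A : V → V → Prop) (hloop : ∀ v : V, ¬ A v v)
    (hn : 2 ≤ Fintype.card V) (hniso : ∀ v : V, ∃ u : V, u ≠ v ∧ (A u v ∨ A v u)) :
    gammaOS A ≤ Fintype.card V - 1 ∧
    ((SimpleGraph.fromRel A).Connected →
      (gammaOS A = Fintype.card V - 1 ↔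
        ((∃ e : V ≃ Fin 3, ∀ u v : V, A u v ↔ ((e u : ℕ) + 1) % 3 = (e v : ℕ)) ∨
         (∃ c : V, ∀ u v : V, (A u v ∨ A v u) ↔
            ((u = c ∧ v ≠ c) ∨ (v = c ∧ u ≠ c)))))) := by
  have : Nonempty V := Fintype.card_pos_iff.1 (by lia)
  exact (stmt_14_general A hloop hniso).imp_right fun h _ => h
end
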